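/- Let X be a proper geodesic metric space and p ∈ X. Then every point q of the closure of Cut(p) that does not itself belong to Cut(p) is conjugate to p along some geodesic from p to q. -/

import Mathlib

open Set Metric Topology Filter
open scoped ENNReal

noncomputable section

namespace InjSoul

/-- The unit interval `[0,1] ⊆ ℝ`. -/
abbrev I01 : Set ℝ := Set.Icc (0 : ℝ) 1

variable {X : Type*} [MetricSpace X]

/-- `0` as a point of `[0,1]`. -/
def pt0 : I01 := ⟨0, by norm_num⟩

/-- `1` as a point of `[0,1]`. -/
def pt1 : I01 := ⟨1, by norm_num⟩

/-- `c : [0,1] → X` is a geodesic of speed (= length) `L`. -/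
def IsGeod (c : C(I01, X)) (L : ℝ) : Prop :=
  0 ≤ L ∧ ∀ s t : I01, dist (c s) (c t) = L * |(s : ℝ) - (t : ℝ)|

/-- `γ : [0,1] → X` is a local geodesic of speed (= length) `L`. -/
def IsLocGeod (γ : C(I01, X)) (L : ℝ) : Prop :=
  0 ≤ L ∧ ∀ t : I01, ∃ ε > 0, ∀ s s' : I01,
    |(s : ℝ) - (t : ℝ)| < ε → |(s' : ℝ) - (t : ℝ)| < ε →
      dist (γ s) (γ s') = L * |(s : ℝ) - (s' : ℝ)|

/-- `X` is a geodesic space: any two points are joined by a geodesic. -/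
def GeodesicSpace (X : Type*) [MetricSpace X] : Prop :=
  ∀ x y : X, ∃ (c : C(I01, X)) (L : ℝ), IsGeod c L ∧ c pt0 = x ∧ c pt1 = y

/-- The cut locus of `p`: all points joined to `p` by at least two distinct geodesics. -/
def Cut (p : X) : Set X :=
  {q | ∃ (γ σ : C(I01, X)) (Lγ Lσ : ℝ), IsGeod γ Lγ ∧ IsGeod σ Lσ ∧
    γ pt0 = p ∧ γ pt1 = q ∧ σ pt0 = p ∧ σ pt1 = q ∧ γ ≠ σ}

/-- The injectivity radius of `p`, an element of `[0,∞]` (`∞` if `Cut p = ∅`). -/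
def inj (p : X) : ℝ≥0∞ := ⨅ q ∈ Cut p, edist p q

/-- The minimal cut locus of `p`: points `γ t₀`, `t₀ ∈ (0,1)`, on a nontrivial local geodesic
`γ` issuing in `p` such that `γ` is minimizing on `[0,t₀]` but on no larger interval `[0,t]`. -/
def MinCut (p : X) : Set X :=
  {q | ∃ (γ : C(I01, X)) (L : ℝ) (t₀ : ℝ) (ht₀ : t₀ ∈ Set.Ioo (0 : ℝ) 1),
      IsLocGeod γ L ∧ 0 < L ∧ γ pt0 = p ∧ γ ⟨t₀, Set.mem_Icc_of_Ioo ht₀⟩ = q ∧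
      dist p q = L * t₀ ∧
      ∀ t : ℝ, ∀ ht : t ∈ Set.Ioc t₀ 1,
        dist p (γ ⟨t, ⟨(ht₀.1.trans ht.1).le, ht.2⟩⟩) ≠ L * t}

/-- The minimal radius of `p`, an element of `[0,∞]` (`∞` if `MinCut p = ∅`). -/
def minRad (p : X) : ℝ≥0∞ := ⨅ q ∈ MinCut p, edist p q

/-- The space `X̃_p` of local geodesics issuing in `p` (including the constant map), viewed
as a subset of the continuous maps `C([0,1], X)` whose metric is the uniform metric `ρ`. -/
def LocGeodFrom (p : X) : Set C(I01, X) := {γ | (∃ L, IsLocGeod γ L) ∧ γ pt0 = p}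

/-- The endpoint map `exp_p : X̃_p → X`, `γ ↦ γ 1`. -/
def endpt : C(I01, X) → X := fun γ => γ pt1

/-- `γ 1` is conjugate to `p = γ 0` along the local geodesic `γ`: no neighborhood `U` of `γ`
in `X̃_p` is mapped homeomorphically onto its image by the endpoint map. -/
def ConjugateAlong (p : X) (γ : C(I01, X)) : Prop :=
  γ ∈ LocGeodFrom p ∧
    ¬ ∃ U : Set C(I01, X), U ⊆ LocGeodFrom p ∧ U ∈ 𝓝[LocGeodFrom p] γ ∧
      Topology.IsEmbedding (U.restrict endpt)

/-- The conjugate radius of `p`: the infimum of lengths of local geodesics issuing in `p`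
along which the endpoint is conjugate to `p` (`∞` if there are none). -/
def conjRad (p : X) : ℝ≥0∞ :=
  sInf {l | ∃ (γ : C(I01, X)) (L : ℝ), IsLocGeod γ L ∧ γ pt0 = p ∧
    ConjugateAlong p γ ∧ l = ENNReal.ofReal L}

/-- The conjugate radius of the space `X`. -/
def conjSpace (X : Type*) [MetricSpace X] : ℝ≥0∞ := ⨅ p : X, conjRad p

/-!
The geodesics issuing in `p` of length at most `r` form a compact set (Arzelà–Ascoli), on which the
endpoint map is therefore closed. Hence a limit `q` of cut points is joined to `p` by a geodesic
`γ`. If `q` is not a cut point, then `γ` is the only such geodesic, so every neighborhood of `γ`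
contains all geodesics from `p` to points close to `q`. Some of these points are cut points, so
the endpoint map is injective on no neighborhood of `γ`.
-/

theorem isCompact_of_isClosed_of_equicontinuous {α β : Type*} [TopologicalSpace α]
    [CompactSpace α] [PseudoMetricSpace β] {S : Set C(α, β)} {K : Set β} (hS : IsClosed S)
    (hK : IsCompact K) (hSK : ∀ f ∈ S, ∀ x, f x ∈ K)
    (hequi : Equicontinuous ((↑) : S → α → β)) : IsCompact S := by
  let e : C(α, β) ≃ₜ BoundedContinuousFunction α β :=
    (ContinuousMap.isometryEquivBoundedOfCompact α β).toHomeomorph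
  rw [← e.symm.isCompact_preimage]
  refine BoundedContinuousFunction.arzela_ascoli₂ K hK _ (hS.preimage e.symm.continuous)
    (fun f x hf => hSK _ hf x) ?_
  exact hequi.comp (S.restrictPreimage e.symm)

theorem eventually_forall_mem_of_isCompact {Y Z : Type*} [TopologicalSpace Y]
    [TopologicalSpace Z] [T2Space Z] {f : Y → Z} {K U : Set Y} {z : Z} (hK : IsCompact K)
    (hf : ContinuousOn f K) (hU : ∀ y ∈ K, f y = z → U ∈ 𝓝[K] y) :
    ∀ᶠ x in 𝓝 z, ∀ y ∈ K, f y = x → y ∈ U := by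
  have : CompactSpace K := isCompact_iff_compactSpace.1 hK
  have hclosed : IsClosedMap (K.domRestrict f) := hf.domRestrict.isClosedMap
  have hfiber : ∀ᶠ x in 𝓝 z, ∀ y ∈ K.domRestrict f ⁻¹' {x}, (y : Y) ∈ U :=
    hclosed.eventually_nhds_fiber z fun y hy => preimage_coe_mem_nhds_subtype.2 (hU y y.2 hy)
  filter_upwards [hfiber] with x hx y hy hyx
  exact hx ⟨y, hy⟩ hyx

section Geodesics

variable {γ : C(I01, X)} {L r : ℝ} {p : X}

theorem IsGeod.dist_endpoints (hγ : IsGeod γ L) : dist (γ pt0) (γ pt1) = L := by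
  simp [hγ.2, pt0, pt1]

theorem IsGeod.dist_le (hγ : IsGeod γ L) (s t : I01) : dist (γ s) (γ t) ≤ L := by
  rw [hγ.2]
  exact mul_le_of_le_one_right hγ.1 (abs_sub_le_of_nonneg_of_le s.2.1 s.2.2 t.2.1 t.2.2)

theorem IsGeod.lipschitzWith (hγ : IsGeod γ L) : LipschitzWith L.toNNReal γ :=
  LipschitzWith.of_dist_le_mul fun s t => by
    rw [hγ.2, Real.coe_toNNReal L hγ.1, Subtype.dist_eq, Real.dist_eq]

theorem IsGeod.isLocGeod (hγ : IsGeod γ L) : IsLocGeod γ L :=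
  ⟨hγ.1, fun _ => ⟨1, one_pos, fun s s' _ _ => hγ.2 s s'⟩⟩

theorem exists_isGeod_iff :
    (∃ L, IsGeod γ L) ↔
      ∀ s t : I01, dist (γ s) (γ t) = dist (γ pt0) (γ pt1) * |(s : ℝ) - (t : ℝ)| := by
  refine ⟨?_, fun h => ⟨_, dist_nonneg, h⟩⟩
  rintro ⟨L, hγ⟩
  rw [hγ.dist_endpoints]
  exact hγ.2

theorem isClosed_setOf_exists_isGeod : IsClosed {γ : C(I01, X) | ∃ L, IsGeod γ L} := by
  simp only [exists_isGeod_iff, ofPred_forall]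
  exact isClosed_iInter fun s => isClosed_iInter fun t => isClosed_eq (by fun_prop) (by fun_prop)

theorem continuous_endpt : Continuous (endpt : C(I01, X) → X) :=
  continuous_eval_const pt1

/-- The geodesics issuing in `p` of length at most `r`, as a subset of `C([0,1], X)` like
`LocGeodFrom p`. The length is expressed as the distance of the endpoints, which makes the
condition visibly closed. -/
def GeodFrom (p : X) (r : ℝ) : Set C(I01, X) :=
  {γ | (∃ L, IsGeod γ L) ∧ γ pt0 = p ∧ dist p (γ pt1) ≤ r}

theorem geodFrom_subset_locGeodFrom : GeodFrom p r ⊆ LocGeodFrom p :=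
  fun _ ⟨⟨L, hγ⟩, hγ0, _⟩ => ⟨⟨L, hγ.isLocGeod⟩, hγ0⟩

theorem GeodFrom.exists_isGeod_le (hγ : γ ∈ GeodFrom p r) : ∃ L ≤ r, IsGeod γ L := by
  obtain ⟨⟨L, hL⟩, rfl, hr⟩ := hγ
  exact ⟨L, hL.dist_endpoints ▸ hr, hL⟩

theorem GeodFrom.apply_mem_closedBall (hγ : γ ∈ GeodFrom p r) (t : I01) :
    γ t ∈ closedBall p r := by
  obtain ⟨L, hLr, hL⟩ := exists_isGeod_le hγ
  rw [← hγ.2.1]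
  exact (hL.dist_le t pt0).trans hLr

theorem GeodFrom.lipschitzWith (hγ : γ ∈ GeodFrom p r) : LipschitzWith r.toNNReal γ := by
  obtain ⟨L, hLr, hL⟩ := exists_isGeod_le hγ
  exact hL.lipschitzWith.weaken (Real.toNNReal_mono hLr)

theorem isClosed_geodFrom : IsClosed (GeodFrom p r) :=
  isClosed_setOf_exists_isGeod.inter <|
    (isClosed_eq (continuous_eval_const pt0) continuous_const).inter <|
      isClosed_le (continuous_const.dist (continuous_eval_const pt1)) continuous_const

theorem isCompact_geodFrom (hK : IsCompact (closedBall p r)) : IsCompact (GeodFrom p r) :=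
  isCompact_of_isClosed_of_equicontinuous isClosed_geodFrom hK
    (fun _ hγ => GeodFrom.apply_mem_closedBall hγ)
    (LipschitzWith.uniformEquicontinuous _ r.toNNReal fun γ =>
      GeodFrom.lipschitzWith γ.2).equicontinuous

end Geodesics

section Conjugate

variable {γ : C(I01, X)} {L r : ℝ} {p q : X} {U : Set C(I01, X)}

theorem exists_isGeod_of_mem_closure (hr : dist p q < r) (hK : IsCompact (closedBall p r))
    (hq : q ∈ closure {x | ∃ (γ : C(I01, X)) (L : ℝ), IsGeod γ L ∧ γ pt0 = p ∧ γ pt1 = x}) :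
    ∃ (γ : C(I01, X)) (L : ℝ), IsGeod γ L ∧ γ pt0 = p ∧ γ pt1 = q := by
  have hclosed : IsClosed (endpt '' GeodFrom p r) :=
    ((isCompact_geodFrom hK).image continuous_endpt).isClosed
  have hnear : ∀ᶠ x in 𝓝 q, x ∈ ball p r := isOpen_ball.eventually_mem (mem_ball'.2 hr)
  have hfreq : ∃ᶠ x in 𝓝 q, x ∈ endpt '' GeodFrom p r := by
    refine ((mem_closure_iff_frequently.1 hq).and_eventually hnear).mono ?_
    rintro _ ⟨⟨γ, L, hγ, hγ0, rfl⟩, hγr⟩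
    exact ⟨γ, ⟨⟨L, hγ⟩, hγ0, (mem_ball'.1 hγr).le⟩, rfl⟩
  obtain ⟨γ, ⟨⟨L, hγ⟩, hγ0, -⟩, hγ1⟩ := hclosed.mem_of_frequently_of_tendsto hfreq tendsto_id
  exact ⟨γ, L, hγ, hγ0, hγ1⟩

theorem IsGeod.eq_of_notMem_cut {σ : C(I01, X)} {L' : ℝ} (hq : q ∉ Cut p) (hγ : IsGeod γ L)
    (hγ0 : γ pt0 = p) (hγ1 : γ pt1 = q) (hσ : IsGeod σ L') (hσ0 : σ pt0 = p)
    (hσ1 : σ pt1 = q) : γ = σ := by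
  by_contra hne
  exact hq ⟨γ, σ, L, L', hγ, hσ, hγ0, hγ1, hσ0, hσ1, hne⟩

theorem IsGeod.eventually_forall_mem (hr : dist p q < r) (hK : IsCompact (closedBall p r))
    (hq : q ∉ Cut p) (hγ : IsGeod γ L) (hγ0 : γ pt0 = p) (hγ1 : γ pt1 = q)
    (hU : U ∈ 𝓝[LocGeodFrom p] γ) :
    ∀ᶠ x in 𝓝 q, ∀ (σ : C(I01, X)) (L' : ℝ), IsGeod σ L' → σ pt0 = p → σ pt1 = x → σ ∈ U := by
  have hnear : ∀ᶠ x in 𝓝 q, x ∈ ball p r := isOpen_ball.eventually_mem (mem_ball'.2 hr)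
  have hmem : ∀ᶠ x in 𝓝 q, ∀ σ ∈ GeodFrom p r, endpt σ = x → σ ∈ U := by
    refine eventually_forall_mem_of_isCompact (isCompact_geodFrom hK)
      continuous_endpt.continuousOn ?_
    rintro σ ⟨⟨L', hσ⟩, hσ0, -⟩ hσ1
    rw [← hγ.eq_of_notMem_cut hq hγ0 hγ1 hσ hσ0 hσ1]
    exact nhdsWithin_mono γ geodFrom_subset_locGeodFrom hU
  filter_upwards [hnear, hmem] with x hxr hx σ L' hσ hσ0 hσ1
  exact hx σ ⟨⟨L', hσ⟩, hσ0, hσ1 ▸ (mem_ball'.1 hxr).le⟩ hσ1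

theorem IsGeod.not_injOn_endpt (hr : dist p q < r) (hK : IsCompact (closedBall p r))
    (hq : q ∈ closure (Cut p) \ Cut p) (hγ : IsGeod γ L) (hγ0 : γ pt0 = p) (hγ1 : γ pt1 = q)
    (hU : U ∈ 𝓝[LocGeodFrom p] γ) : ¬ InjOn endpt U := by
  intro hinj
  obtain ⟨x, ⟨σ, τ, Lσ, Lτ, hσ, hτ, hσ0, hσ1, hτ0, hτ1, hne⟩, hx⟩ :=
    ((mem_closure_iff_frequently.1 hq.1).and_eventually
      (hγ.eventually_forall_mem hr hK hq.2 hγ0 hγ1 hU)).exists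
  exact hne <| hinj (hx σ Lσ hσ hσ0 hσ1) (hx τ Lτ hτ hτ0 hτ1) (hσ1.trans hτ1.symm)

end Conjugate

theorem conjugate_of_mem_closure_cut_not_cut_general {p q : X} {r : ℝ} (hr : dist p q < r)
    (hK : IsCompact (closedBall p r)) (hq : q ∈ closure (Cut p) \ Cut p) :
    ∃ (γ : C(I01, X)) (L : ℝ), IsGeod γ L ∧ γ pt0 = p ∧ γ pt1 = q ∧
      ConjugateAlong p γ := by
  have hjoined : Cut p ⊆
      {x | ∃ (γ : C(I01, X)) (L : ℝ), IsGeod γ L ∧ γ pt0 = p ∧ γ pt1 = x} :=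
    fun _ ⟨γ, _, L, _, hγ, _, hγ0, hγ1, _⟩ => ⟨γ, L, hγ, hγ0, hγ1⟩
  obtain ⟨γ, L, hγ, hγ0, hγ1⟩ := exists_isGeod_of_mem_closure hr hK (closure_mono hjoined hq.1)
  refine ⟨γ, L, hγ, hγ0, hγ1, ⟨⟨L, hγ.isLocGeod⟩, hγ0⟩, ?_⟩
  rintro ⟨U, -, hU, hemb⟩
  exact hγ.not_injOn_endpt hr hK hq hγ0 hγ1 hU (injOn_iff_injective.2 hemb.injective)

/-- In a proper geodesic metric space, every point of `closure (Cut p)` that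
is not itself in `Cut p` is conjugate to `p` along some geodesic from `p` to it. -/
theorem conjugate_of_mem_closure_cut_not_cut {X : Type*} [MetricSpace X] [ProperSpace X]
    (hgeo : GeodesicSpace X) (p q : X) (hq : q ∈ closure (Cut p) \ Cut p) :
    ∃ (γ : C(I01, X)) (L : ℝ), IsGeod γ L ∧ γ pt0 = p ∧ γ pt1 = q ∧
      ConjugateAlong p γ :=
  conjugate_of_mem_closure_cut_not_cut_general (lt_add_one (dist p q))
    (isCompact_closedBall p (dist p q + 1)) hq

end InjSoul
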